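/- arXiv:q-alg/9709008 — 2 statements merged into one kernel-verified Lean document; each statement's English description precedes it below -/
import Mathlib

section
/- Let M be a finitely generated module over ℂ[∂] that is a module over a conformal algebra R with no non-zero invariants (no v ≠ 0 with a_{(n)}^M v = 0 for all a ∈ R, n ∈ ℤ₊). Then M is torsion-free, hence a free ℂ[∂]-module. -/
open Finset

/-- A conformal algebra over ℂ: a ℂ[∂]-module (a ℂ-module together with the action `D` of ∂)
with ℂ-bilinear `n`-th products `mul n` for `n ∈ ℤ₊`, satisfying axioms (C0)-(C3).
Here, by convention, `mul (n-1)` for `n = 0` occurs only with coefficient `n = 0`. -/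
structure ConformalAlgebra (R : Type*) [AddCommGroup R] [Module ℂ R] where
  /-- the action of `∂` -/
  D : R →ₗ[ℂ] R
  /-- the `n`-th products `a_{(n)} b` -/
  mul : ℕ → R →ₗ[ℂ] R →ₗ[ℂ] R
  /-- (C0) `a_{(n)} b = 0` for `n ≫ 0` -/
  c0 : ∀ a b : R, ∃ N : ℕ, ∀ n ≥ N, mul n a b = 0
  /-- (C1) `(∂a)_{(n)} b = -n a_{(n-1)} b` -/
  c1 : ∀ (n : ℕ) (a b : R), mul n (D a) b = -(n : ℂ) • mul (n - 1) a b
  /-- (C2) `a_{(n)} b = ∑_{j≥0} (-1)^{j+n+1} (∂^j / j!) (b_{(n+j)} a)` (a finite sum by (C0)) -/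
  c2 : ∀ (n : ℕ) (a b : R) (N : ℕ), (∀ j ≥ N, mul (n + j) b a = 0) →
    mul n a b = ∑ j ∈ range N,
      ((-1 : ℂ) ^ (j + n + 1) * ((j.factorial : ℂ))⁻¹) • (⇑D)^[j] (mul (n + j) b a)
  /-- (C3) the conformal Jacobi identity -/
  c3 : ∀ (m n : ℕ) (a b c : R),
    mul m a (mul n b c) = (∑ j ∈ range (m + 1), ((m.choose j : ℂ)) •
      mul (m + n - j) (mul j a b) c) + mul n b (mul m a c)

variable {R : Type*} [AddCommGroup R] [Module ℂ R]

/-- A module over a conformal algebra `S` on `R`: a `ℂ[∂]`-module `M` (with `∂` acting by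
`DM`) together with ℂ-bilinear actions `act n`, `n ∈ ℤ₊`, satisfying (M0)-(M2). -/
structure ConformalModule (S : ConformalAlgebra R) (M : Type*)
    [AddCommGroup M] [Module ℂ M] where
  /-- the action of `∂` on `M` -/
  DM : M →ₗ[ℂ] M
  /-- the `n`-th actions `a_{(n)}^M` -/
  act : ℕ → R →ₗ[ℂ] M →ₗ[ℂ] M
  /-- (M0) `a_{(n)}^M v = 0` for `n ≫ 0` -/
  m0 : ∀ (a : R) (v : M), ∃ N : ℕ, ∀ n ≥ N, act n a v = 0
  /-- (M1) `[a_{(m)}^M, b_{(n)}^M] = ∑_j C(m,j) (a_{(j)}b)_{(m+n-j)}^M` -/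
  m1 : ∀ (m n : ℕ) (a b : R) (v : M),
    act m a (act n b v) - act n b (act m a v)
      = ∑ j ∈ range (m + 1), ((m.choose j : ℂ)) • act (m + n - j) (S.mul j a b) v
  /-- (M2) `(∂a)_{(n)}^M = -n a_{(n-1)}^M` -/
  m2a : ∀ (n : ℕ) (a : R) (v : M), act n (S.D a) v = -(n : ℂ) • act (n - 1) a v
  /-- (M2) `[∂, a_{(n)}^M] = -n a_{(n-1)}^M` -/
  m2b : ∀ (n : ℕ) (a : R) (v : M),
    DM (act n a v) - act n a (DM v) = -(n : ℂ) • act (n - 1) a v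

/-! If `∂v = μv`, then `[∂, a_{(n+1)}] = -(n+1) a_{(n)}` applied to `v` shows that
`a_{(n+1)} v = 0` forces `a_{(n)} v = 0`. By locality `a_{(N)} v = 0` for large `N`, so descending
induction kills every `a_{(n)} v`: an eigenvector of `∂` is an invariant. Without non-zero
invariants `∂` thus has no eigenvalue, and over an algebraically closed field this makes every
non-zero polynomial in `∂` injective. Freeness is then the structure theorem over a PID. -/

open Module Polynomial Submodule
open scoped Pointwise

/-- A conformal linear map between modules with endomorphisms `D` and `E` (the actions of `∂`),
encoded by the coefficients `A n` of `A_λ = ∑ (λⁿ / n!) A n`: the family is locally finite, and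
`A_λ ∘ ∂ = (∂ + λ) ∘ A_λ`. At `n = 0` the truncated `n - 1` has coefficient zero. -/
structure IsConformalLinearMap {K V W : Type*} [Ring K] [AddCommGroup V] [Module K V]
    [AddCommGroup W] [Module K W] (D : End K V) (E : End K W) (A : ℕ → V →ₗ[K] W) : Prop where
  eventually_apply_eq_zero : ∀ v, ∀ᶠ n in Filter.atTop, A n v = 0
  apply_sub_apply : ∀ n v, E (A n v) - A n (D v) = -(n • A (n - 1) v)

theorem ConformalModule.isConformalLinearMap_act {M : Type*} [AddCommGroup M] [Module ℂ M]
    {S : ConformalAlgebra R} (CM : ConformalModule S M) (a : R) :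
    IsConformalLinearMap CM.DM CM.DM fun n => CM.act n a where
  eventually_apply_eq_zero v := Filter.eventually_atTop.mpr (CM.m0 a v)
  apply_sub_apply n v := by rw [CM.m2b, neg_smul, Nat.cast_smul_eq_nsmul]

theorem IsConformalLinearMap.apply_eq_zero_of_apply_eq_smul {K V W : Type*} [Ring K]
    [AddCommGroup V] [Module K V] [AddCommGroup W] [Module K W] [IsAddTorsionFree W]
    {D : End K V} {E : End K W} {A : ℕ → V →ₗ[K] W} (hA : IsConformalLinearMap D E A)
    {μ : K} {v : V} (hv : D v = μ • v) (n : ℕ) : A n v = 0 := by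
  have descend (k : ℕ) (hk : A (k + 1) v = 0) : A k v = 0 := by
    have h := hA.apply_sub_apply (k + 1) v
    rw [hv, map_smul, hk, map_zero, smul_zero, sub_zero, Nat.add_sub_cancel] at h
    exact (smul_eq_zero.mp (neg_eq_zero.mp h.symm)).resolve_left k.succ_ne_zero
  obtain ⟨N, hN, hnN⟩ :=
    ((hA.eventually_apply_eq_zero v).and (Filter.eventually_ge_atTop n)).exists
  exact Nat.decreasingInduction (motive := fun k _ => A k v = 0) (fun k _ => descend k) hN hnN

theorem aeval_injective_of_forall_not_hasEigenvalue {K V : Type*} [CommRing K] [IsDomain K]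
    [AddCommGroup V] [Module K V] [IsTorsionFree K V] {f : End K V}
    (hf : ∀ μ, ¬ f.HasEigenvalue μ) {p : K[X]} (hp : p.Splits) (hp₀ : p ≠ 0) :
    Function.Injective (aeval f p) := by
  induction hp using Submonoid.closure_induction with
  | mem q hq =>
    refine (injective_iff_map_eq_zero _).mpr fun v hv => ?_
    rcases hq with ⟨a, rfl⟩ | ⟨a, rfl⟩
    · have hav : a • v = 0 := by simpa using hv
      exact (smul_eq_zero.mp hav).resolve_left (C_ne_zero.mp hp₀)
    · have hfv : f v = -a • v := by simpa [add_eq_zero_iff_eq_neg] using hv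
      by_contra hv₀
      exact hf (-a) (End.hasEigenvalue_of_hasEigenvector
        ⟨End.mem_eigenspace_iff.mpr hfv, hv₀⟩)
  | one => rw [map_one]; exact Function.injective_id
  | mul q r _ _ hq hr =>
    rw [map_mul, End.mul_eq_comp, LinearMap.coe_comp]
    exact (hq (left_ne_zero_of_mul hp₀)).comp (hr (right_ne_zero_of_mul hp₀))

theorem span_range_X_pow (K : Type*) [Semiring K] :
    span K (Set.range fun k : ℕ => (X : K[X]) ^ k) = ⊤ := by
  simpa only [coe_basisMonomials, monomial_one_right_eq_X_pow] using (basisMonomials K).span_eq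

theorem mem_span_iterate_iff {K V : Type*} [CommSemiring K] [AddCommMonoid V] [Module K V]
    (f : End K V) (s : Set V) (v : V) :
    v ∈ span K {x | ∃ w ∈ s, ∃ k : ℕ, x = f^[k] w} ↔
      AEval'.of f v ∈ span K[X] (AEval'.of f '' s) := by
  have hpow (k : ℕ) (w : V) : (X : K[X]) ^ k • AEval'.of f w = AEval'.of f (f^[k] w) := by
    rw [AEval'.X_pow_smul_of, End.smul_def, End.pow_apply]
  have himage : AEval'.of f '' {x | ∃ w ∈ s, ∃ k : ℕ, x = f^[k] w} =
      (Set.range fun k : ℕ => (X : K[X]) ^ k) • (AEval'.of f '' s) := by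
    ext m
    constructor
    · rintro ⟨_, ⟨w, hw, k, rfl⟩, rfl⟩
      exact ⟨_, ⟨k, rfl⟩, _, ⟨w, hw, rfl⟩, hpow k w⟩
    · rintro ⟨_, ⟨k, rfl⟩, _, ⟨w, hw, rfl⟩, rfl⟩
      exact ⟨_, ⟨w, hw, k, rfl⟩, (hpow k w).symm⟩
  rw [← restrictScalars_mem K (span K[X] _), ← span_smul_of_span_eq_top (span_range_X_pow K),
    ← himage]
  exact (apply_mem_span_image_iff_mem_span (AEval'.of f).injective).symm

theorem exists_free_generators_of_aeval_injective {K V : Type*} [Field K] [AddCommGroup V]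
    [Module K V] {f : End K V} (hf : ∀ p : K[X], p ≠ 0 → Function.Injective (aeval f p))
    (hfg : ∃ s : Finset V, ∀ v : V, v ∈ span K {x | ∃ w ∈ s, ∃ k : ℕ, x = f^[k] w}) :
    ∃ (n : ℕ) (b : Fin n → V),
      (∀ v : V, v ∈ span K {x | ∃ (i : Fin n) (k : ℕ), x = f^[k] (b i)}) ∧
      ∀ c : Fin n → K[X], ∑ i, aeval f (c i) (b i) = 0 → ∀ i, c i = 0 := by
  let e := AEval'.of f
  have : IsTorsionFree K[X] (AEval' f) := .of_smul_eq_zero fun p m hm =>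
    or_iff_not_imp_left.mpr fun hp => hf p hp (hm.trans (map_zero (aeval f p)).symm)
  have : Module.Finite K[X] (AEval' f) := by
    obtain ⟨s, hs⟩ := hfg
    exact ⟨fg_def.mpr ⟨e '' s, s.finite_toSet.image e,
      eq_top_iff'.mpr fun m => (mem_span_iterate_iff f s (e.symm m)).mp (hs _)⟩⟩
  obtain ⟨n, b⟩ : Σ n : ℕ, Basis (Fin n) K[X] (AEval' f) := basisOfFiniteTypeTorsionFree'
  refine ⟨n, e.symm ∘ b, fun v => ?_, Fintype.linearIndependent_iff.mp b.linearIndependent⟩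
  have hv : e v ∈ span K[X] (e '' Set.range (e.symm ∘ b)) := by
    rw [← Set.range_comp]
    exact b.mem_span (e v)
  simpa only [Set.exists_range_iff] using (mem_span_iterate_iff f _ v).mpr hv

theorem finite_module_no_invariants_free_general {K V W ι : Type*} [Field K] [IsAlgClosed K]
    [CharZero K] [AddCommGroup V] [Module K V] [AddCommGroup W] [Module K W]
    {D : End K V} {E : End K W} {A : ι → ℕ → V →ₗ[K] W}
    (hA : ∀ a, IsConformalLinearMap D E (A a))
    (hinv : ∀ v : V, (∀ n a, A a n v = 0) → v = 0) :
    (∀ p : K[X], p ≠ 0 → ∀ v : V, aeval D p v = 0 → v = 0) ∧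
    ((∃ s : Finset V, ∀ v : V, v ∈ span K {x | ∃ w ∈ s, ∃ k : ℕ, x = D^[k] w}) →
      ∃ (n : ℕ) (b : Fin n → V),
        (∀ v : V, v ∈ span K {x | ∃ (i : Fin n) (k : ℕ), x = D^[k] (b i)}) ∧
        ∀ c : Fin n → K[X], ∑ i, aeval D (c i) (b i) = 0 → ∀ i, c i = 0) := by
  have : IsAddTorsionFree W := .of_isTorsionFree K W
  have hD (μ : K) : ¬ D.HasEigenvalue μ := fun hμ =>
    let ⟨v, hv⟩ := hμ.exists_hasEigenvector
    hv.2 (hinv v fun n a => (hA a).apply_eq_zero_of_apply_eq_smul hv.apply_eq_smul n)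
  have hinj (p : K[X]) (hp : p ≠ 0) : Function.Injective (aeval D p) :=
    aeval_injective_of_forall_not_hasEigenvalue hD (IsAlgClosed.splits p) hp
  exact ⟨fun p hp v => (map_eq_zero_iff _ (hinj p hp)).mp,
    exists_free_generators_of_aeval_injective hinj⟩

/-- A finitely generated (over `ℂ[∂]`) module `M` over a conformal algebra with no non-zero
invariants is torsion-free over `ℂ[∂]`, hence a free `ℂ[∂]`-module. -/
theorem finite_module_no_invariants_free {M : Type*} [AddCommGroup M] [Module ℂ M]
    (S : ConformalAlgebra R) (CM : ConformalModule S M)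
    (hfg : ∃ s : Finset M, ∀ v : M,
      v ∈ Submodule.span ℂ {x | ∃ w ∈ s, ∃ k : ℕ, x = (⇑CM.DM)^[k] w})
    (hinv : ∀ v : M, (∀ (n : ℕ) (a : R), CM.act n a v = 0) → v = 0) :
    (∀ p : Polynomial ℂ, p ≠ 0 → ∀ v : M,
        Polynomial.aeval (CM.DM : Module.End ℂ M) p v = 0 → v = 0) ∧
    ∃ (n : ℕ) (bv : Fin n → M),
      (∀ v : M, v ∈ Submodule.span ℂ {x | ∃ (i : Fin n) (k : ℕ), x = (⇑CM.DM)^[k] (bv i)}) ∧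
      ∀ c : Fin n → Polynomial ℂ,
        (∑ i, Polynomial.aeval (CM.DM : Module.End ℂ M) (c i) (bv i)) = 0 → ∀ i, c i = 0 :=
  (finite_module_no_invariants_free_general CM.isConformalLinearMap_act hinv).imp_right (· hfg)
end

section
/- For a simple finite-dimensional Lie algebra g with Killing form (·|·), the sequence of bilinear forms on the current conformal algebra R(g̃) determined by αₙ(a,b) = δ_{n,1}(a|b) for a,b ∈ g (and extended to ℂ[∂]⊗g using αₙ(∂a,b) = -n α_{n-1}(a,b) and ∂-skew-derivation properties) is a 2-cocycle, and it is not of the form αₙ(a,b) = f(a_{(n)}b) for any ℂ-linear f : R(g̃) → ℂ (i.e. it is a non-trivial cocycle). -/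
open Finset

/- The current conformal algebra `R(g̃) = ℂ[∂] ⊗ g` is realized as `ℕ →₀ g`, with `∂` acting
as the index shift and `g` embedded via `Finsupp.single 0`. -/

variable {g : Type*} [LieRing g] [LieAlgebra ℂ g]

/-- The action of `∂` on `ℂ[∂] ⊗ g ≅ ℕ →₀ g`. -/
noncomputable def curD (g : Type*) [LieRing g] [LieAlgebra ℂ g] :
    (ℕ →₀ g) →ₗ[ℂ] (ℕ →₀ g) := Finsupp.lmapDomain g ℂ (· + 1)

/-- The current conformal algebra structure: `∂` acts by the shift, `a_{(0)}b = [a,b]` and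
`a_{(j)}b = 0` for `j > 0`, for `a, b ∈ g`. -/
def IsCurrent (S : ConformalAlgebra (ℕ →₀ g)) : Prop :=
  S.D = curD g ∧
  (∀ a b : g, S.mul 0 (Finsupp.single 0 a) (Finsupp.single 0 b) = Finsupp.single 0 ⁅a, b⁆) ∧
  ∀ j > 0, ∀ a b : g, S.mul j (Finsupp.single 0 a) (Finsupp.single 0 b) = 0

/-- A 2-cocycle on a conformal algebra (with the vanishing required by (C0)). -/
def IsCocycle {R : Type*} [AddCommGroup R] [Module ℂ R] (S : ConformalAlgebra R)
    (al : ℕ → R →ₗ[ℂ] R →ₗ[ℂ] ℂ) : Prop :=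
  (∀ a b : R, ∃ N : ℕ, ∀ n ≥ N, al n a b = 0) ∧
  (∀ (n : ℕ) (a b : R), al n (S.D a) b = -(n : ℂ) * al (n - 1) a b) ∧
  (∀ (n : ℕ) (a b : R), al n a b = (-1 : ℂ) ^ (n + 1) * al n b a) ∧
  (∀ (m n : ℕ) (a b c : R),
    al m a (S.mul n b c) = (∑ j ∈ range (m + 1), (m.choose j : ℂ) *
      al (m + n - j) (S.mul j a b) c) + al n b (S.mul m a c))

/-!
The forms are `αₙ(∂ⁱa, ∂ᵏb) = (-1)ⁱ n! δ_{n,i+k+1} (a|b)`, the only extension of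
`δ_{n,1}(a|b)` that is sesquilinear in `∂`.  For sesquilinear `α`, the defect
`J_{m,n}(a,b,c) = α_m(a, b_{(n)}c) - ∑ C(m,j) α_{m+n-j}(a_{(j)}b, c) - αₙ(b, a_{(m)}c)`
satisfies `J_{m,n}(∂a,b,c) = -m J_{m-1,n}(a,b,c)`, `J_{m,n}(a,∂b,c) = -n J_{m,n-1}(a,b,c)` and
`J_{m,n}(a,b,∂c) = m J_{m-1,n}(a,b,c) + n J_{m,n-1}(a,b,c)`, so it vanishes as soon as it does
on generators of the `ℂ[∂]`-module.  On `g` it vanishes because the form is invariant.  If the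
cocycle were trivial, then `(a|b) = α₁(a,b) = f(a_{(1)}b) = f(0) = 0` for all `a, b ∈ g`.
-/

section Sums

variable {A : Type*} [Semiring A]

lemma sum_antidiagonal_choose_mul_fst (m : ℕ) (F : ℕ → ℕ → A) :
    ∑ p ∈ antidiagonal m, (m.choose p.1 : A) * (p.1 * F (p.1 - 1) p.2) =
      m * ∑ p ∈ antidiagonal (m - 1), ((m - 1).choose p.1 : A) * F p.1 p.2 := by
  cases m with
  | zero => simp
  | succ m =>
    simp only [Nat.sum_antidiagonal_succ, Nat.cast_zero, zero_mul, mul_zero, zero_add,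
      Nat.add_sub_cancel, mul_sum, ← mul_assoc, ← Nat.cast_mul, Nat.add_one_mul_choose_eq]

lemma sum_antidiagonal_choose_mul_snd (m : ℕ) (F : ℕ → ℕ → A) :
    ∑ p ∈ antidiagonal m, (m.choose p.1 : A) * (p.2 * F p.1 (p.2 - 1)) =
      m * ∑ p ∈ antidiagonal (m - 1), ((m - 1).choose p.1 : A) * F p.1 p.2 := by
  have choose_swap (k : ℕ) (G : ℕ → ℕ → A) :
      ∑ p ∈ antidiagonal k, (k.choose p.1 : A) * G p.1 p.2 =
        ∑ p ∈ antidiagonal k, (k.choose p.1 : A) * G p.2 p.1 := by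
    rw [← Nat.sum_antidiagonal_swap]
    refine sum_congr rfl fun p hp => ?_
    rw [Prod.fst_swap, Prod.snd_swap,
      Nat.choose_symm_of_eq_add ((mem_antidiagonal.1 hp).symm.trans (add_comm _ _))]
  rw [choose_swap m fun j k => k * F j (k - 1), choose_swap (m - 1),
    sum_antidiagonal_choose_mul_fst m fun j k => F k j]

-- A truncated `0 - 1` is harmless, as its term has the coefficient `0`.
lemma cast_add_mul_apply_pred (k n : ℕ) (F : ℕ → A) :
    ((k : A) + n) * F (k + n - 1) = k * F (k - 1 + n) + n * F (k + (n - 1)) := by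
  rcases k with _ | k <;> rcases n with _ | n <;> simp [add_mul, ← add_assoc, add_right_comm]

end Sums

section Generation

variable {K R M : Type*} [CommSemiring K] [AddCommMonoid R] [Module K R]
  [AddCommMonoid M] [Module K M]

/-- `G` generates `R` as a `K[∂]`-module, where `∂` acts on `R` by `D`. -/
def GeneratesUnder (D : Module.End K R) (G : Set R) : Prop :=
  ∀ p ∈ D.invtSubmodule, G ⊆ p → p = ⊤

lemma GeneratesUnder.eq_zero_of_forall_mem {D : Module.End K R} {G : Set R}
    (hG : GeneratesUnder D G) {ι : Type*} {T : ι → R →ₗ[K] M}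
    (hD : ∀ x, (∀ i, T i x = 0) → ∀ i, T i (D x) = 0)
    (hT : ∀ i, ∀ x ∈ G, T i x = 0) (i : ι) : T i = 0 := by
  have iInf_ker_eq_top : ⨅ i, LinearMap.ker (T i) = ⊤ := by
    refine hG _ (fun x hx => ?_) fun x hx => ?_
    · simp only [Submodule.mem_comap, Submodule.mem_iInf, LinearMap.mem_ker] at hx ⊢
      exact hD x hx
    · simpa using fun i => hT i x hx
  exact LinearMap.ker_eq_top.1 (iInf_eq_top.1 iInf_ker_eq_top i)

end Generation

section Sesquilinear

variable {R : Type*} [AddCommGroup R] [Module ℂ R]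

/-- Sesquilinearity in `∂` of a sequence of bilinear forms, i.e. `α_λ(∂a, b) = -λ α_λ(a, b)` and
`α_λ(a, ∂b) = λ α_λ(a, b)` for the generating series `α_λ = ∑ₙ (λⁿ / n!) αₙ`. -/
structure IsSesquilinear (D : Module.End ℂ R) (al : ℕ → R →ₗ[ℂ] R →ₗ[ℂ] ℂ) : Prop where
  left : ∀ n a b, al n (D a) b = -(n : ℂ) * al (n - 1) a b
  right : ∀ n a b, al n a (D b) = (n : ℂ) * al (n - 1) a b

lemma IsSesquilinear.of_left_of_skew {D : Module.End ℂ R} {al : ℕ → R →ₗ[ℂ] R →ₗ[ℂ] ℂ}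
    (left : ∀ n a b, al n (D a) b = -(n : ℂ) * al (n - 1) a b)
    (skew : ∀ n a b, al n a b = (-1 : ℂ) ^ (n + 1) * al n b a) : IsSesquilinear D al where
  left := left
  right n a b := by
    cases n with
    | zero => rw [skew, left, Nat.cast_zero, neg_zero, zero_mul, mul_zero, zero_mul]
    | succ n =>
      rw [skew, left, Nat.add_sub_cancel, skew n a b]
      ring

end Sesquilinear

namespace ConformalAlgebra

variable {R : Type*} [AddCommGroup R] [Module ℂ R] (S : ConformalAlgebra R)

lemma mul_D_right (n : ℕ) (a b : R) :
    S.mul n a (S.D b) = S.D (S.mul n a b) + (n : ℂ) • S.mul (n - 1) a b := by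
  obtain ⟨N, hN⟩ := S.c0 b a
  -- By (C2), `(n + j) b_{(n+j-1)}a` appears in the `j`-th summand on the left; the part with `j`
  -- gives the first term on the right and the part with `n` the second.
  have summand_eq (j : ℕ) :
      ((-1 : ℂ) ^ (j + n + 1) * ((j.factorial : ℂ))⁻¹) •
        (⇑S.D)^[j] (S.mul (n + j) (S.D b) a) =
      ((-1 : ℂ) ^ (j + n) * ((j.factorial : ℂ))⁻¹ * j) •
        (⇑S.D)^[j] (S.mul (n + j - 1) b a) +
      (n : ℂ) • (((-1 : ℂ) ^ (j + n) * ((j.factorial : ℂ))⁻¹) •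
        (⇑S.D)^[j] (S.mul (n + j - 1) b a)) := by
    simp only [S.c1, ← Module.End.coe_pow, map_smul, smul_smul, ← add_smul]
    congr 1
    push_cast
    ring
  have factorial_succ_inv (j : ℕ) :
      (((j + 1).factorial : ℂ))⁻¹ * ((j + 1 : ℕ) : ℂ) = ((j.factorial : ℂ))⁻¹ := by
    rw [Nat.factorial_succ, Nat.cast_mul, mul_inv_rev, mul_assoc,
      inv_mul_cancel₀ (Nat.cast_ne_zero.2 j.succ_ne_zero), mul_one]
  rw [S.c2 n a (S.D b) (N + 1) fun j hj => by rw [S.c1, hN _ (by omega), smul_zero],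
    sum_congr rfl fun j _ => summand_eq j, sum_add_distrib, ← smul_sum]
  congr 1
  · rw [S.c2 n a b N fun j hj => hN _ (by omega), sum_range_succ']
    simp only [Nat.cast_zero, mul_zero, zero_smul, add_zero, map_sum, map_smul, mul_assoc,
      factorial_succ_inv, Function.iterate_succ_apply', ← add_assoc, Nat.add_sub_cancel,
      add_right_comm _ 1 n]
  · cases n with
    | zero => simp
    | succ n =>
      rw [Nat.add_sub_cancel, S.c2 n a b (N + 1) fun j hj => hN _ (by omega)]
      simp only [add_right_comm n 1, ← add_assoc, Nat.add_sub_cancel]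

/-- The trilinear form `(a, b, c) ↦ α_m(a, b_{(n)}c)`. -/
def leftNested (al : ℕ → R →ₗ[ℂ] R →ₗ[ℂ] ℂ) (m n : ℕ) : R →ₗ[ℂ] R →ₗ[ℂ] R →ₗ[ℂ] ℂ :=
  LinearMap.lcomp ℂ _ (S.mul n) ∘ₗ LinearMap.llcomp ℂ R R ℂ ∘ₗ al m

/-- The trilinear form measuring the failure of the Jacobi identity in the definition of a
2-cocycle. The sum over `j ≤ m` is written over the pairs `(j, k)` with `j + k = m`. -/
def jacobiDefect (al : ℕ → R →ₗ[ℂ] R →ₗ[ℂ] ℂ) (m n : ℕ) : R →ₗ[ℂ] R →ₗ[ℂ] R →ₗ[ℂ] ℂ :=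
  S.leftNested al m n -
    ∑ p ∈ antidiagonal m, (m.choose p.1 : ℂ) • (S.mul p.1).compr₂ (al (p.2 + n)) -
      (S.leftNested al n m).flip

variable {S} {al : ℕ → R →ₗ[ℂ] R →ₗ[ℂ] ℂ}

lemma jacobiDefect_apply (m n : ℕ) (a b c : R) :
    S.jacobiDefect al m n a b c = al m a (S.mul n b c) -
      ∑ p ∈ antidiagonal m, (m.choose p.1 : ℂ) * al (p.2 + n) (S.mul p.1 a b) c -
        al n b (S.mul m a c) := by
  simp [jacobiDefect, leftNested, LinearMap.sum_apply]

lemma jacobiDefect_eq_zero_iff (m n : ℕ) (a b c : R) :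
    S.jacobiDefect al m n a b c = 0 ↔
      al m a (S.mul n b c) = (∑ j ∈ range (m + 1), (m.choose j : ℂ) *
        al (m + n - j) (S.mul j a b) c) + al n b (S.mul m a c) := by
  rw [jacobiDefect_apply, sub_sub, sub_eq_zero, Nat.sum_antidiagonal_eq_sum_range_succ
    (fun j k => (m.choose j : ℂ) * al (k + n) (S.mul j a b) c)]
  rw [sum_congr rfl fun j hj => by rw [← Nat.sub_add_comm (mem_range_succ_iff.1 hj)]]

lemma jacobiDefect_D_left (hal : IsSesquilinear S.D al) (m n : ℕ) (a b c : R) :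
    S.jacobiDefect al m n (S.D a) b c = -(m : ℂ) * S.jacobiDefect al (m - 1) n a b c := by
  have sum_eq := sum_antidiagonal_choose_mul_fst m fun j k => al (k + n) (S.mul j a b) c
  simp only [jacobiDefect_apply, S.c1, hal.left, map_smul, LinearMap.smul_apply, smul_eq_mul,
    neg_mul, mul_neg, sum_neg_distrib, sum_eq]
  ring

lemma jacobiDefect_D_middle (hal : IsSesquilinear S.D al) (m n : ℕ) (a b c : R) :
    S.jacobiDefect al m n a (S.D b) c = -(n : ℂ) * S.jacobiDefect al m (n - 1) a b c := by
  have sum_fst := sum_antidiagonal_choose_mul_fst m fun j k => al (k + n) (S.mul j a b) c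
  have sum_snd := sum_antidiagonal_choose_mul_snd m fun j k => al (k + n) (S.mul j a b) c
  have pred (j k : ℕ) := cast_add_mul_apply_pred k n fun i => al i (S.mul j a b) c
  simp only [jacobiDefect_apply, S.c1, S.mul_D_right, hal.left, map_add, map_smul,
    LinearMap.add_apply, LinearMap.smul_apply, smul_eq_mul, Nat.cast_add, neg_mul, pred, mul_add,
    mul_neg, sum_add_distrib, sum_neg_distrib, sum_fst, sum_snd,
    mul_left_comm _ (n : ℂ), ← mul_sum]
  ring

lemma jacobiDefect_D_right (hal : IsSesquilinear S.D al) (m n : ℕ) (a b c : R) :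
    S.jacobiDefect al m n a b (S.D c) =
      m * S.jacobiDefect al (m - 1) n a b c + n * S.jacobiDefect al m (n - 1) a b c := by
  have sum_snd := sum_antidiagonal_choose_mul_snd m fun j k => al (k + n) (S.mul j a b) c
  have pred (j k : ℕ) := cast_add_mul_apply_pred k n fun i => al i (S.mul j a b) c
  simp only [jacobiDefect_apply, S.mul_D_right, hal.right, map_add, map_smul, smul_eq_mul,
    Nat.cast_add, pred, mul_add, sum_add_distrib, sum_snd, mul_left_comm _ (n : ℂ), ← mul_sum]
  ring

lemma jacobiDefect_eq_zero_of_generatesUnder {G : Set R} (hG : GeneratesUnder S.D G)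
    (hal : IsSesquilinear S.D al)
    (hJ : ∀ m n, ∀ a ∈ G, ∀ b ∈ G, ∀ c ∈ G, S.jacobiDefect al m n a b c = 0) (m n : ℕ) :
    S.jacobiDefect al m n = 0 := by
  have right (m n : ℕ) (a) (ha : a ∈ G) (b) (hb : b ∈ G) : S.jacobiDefect al m n a b = 0 :=
    hG.eq_zero_of_forall_mem (T := fun i : ℕ × ℕ => S.jacobiDefect al i.1 i.2 a b)
      (fun c hc i => by
        rw [jacobiDefect_D_right hal, hc (i.1 - 1, i.2), hc (i.1, i.2 - 1), mul_zero, mul_zero,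
          add_zero])
      (fun i => hJ i.1 i.2 a ha b hb) (m, n)
  have middle (m n : ℕ) (a) (ha : a ∈ G) : S.jacobiDefect al m n a = 0 :=
    hG.eq_zero_of_forall_mem (T := fun i : ℕ × ℕ => S.jacobiDefect al i.1 i.2 a)
      (fun b hb i => by
        ext c
        rw [jacobiDefect_D_middle hal, hb (i.1, i.2 - 1)]
        simp)
      (fun i => right i.1 i.2 a ha) (m, n)
  exact hG.eq_zero_of_forall_mem (T := fun i : ℕ × ℕ => S.jacobiDefect al i.1 i.2)
    (fun a ha i => by
      ext b c
      rw [jacobiDefect_D_left hal, ha (i.1 - 1, i.2)]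
      simp)
    (fun i => middle i.1 i.2) (m, n)

theorem isCocycle_of_generatesUnder {G : Set R} (hG : GeneratesUnder S.D G)
    (vanish : ∀ a b, ∃ N : ℕ, ∀ n ≥ N, al n a b = 0)
    (left : ∀ n a b, al n (S.D a) b = -(n : ℂ) * al (n - 1) a b)
    (skew : ∀ n a b, al n a b = (-1 : ℂ) ^ (n + 1) * al n b a)
    (jacobi : ∀ m n, ∀ a ∈ G, ∀ b ∈ G, ∀ c ∈ G, S.jacobiDefect al m n a b c = 0) :
    IsCocycle S al := by
  refine ⟨vanish, left, skew, fun m n a b c => (jacobiDefect_eq_zero_iff m n a b c).1 ?_⟩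
  rw [jacobiDefect_eq_zero_of_generatesUnder hG (.of_left_of_skew left skew) jacobi,
    LinearMap.zero_apply, LinearMap.zero_apply, LinearMap.zero_apply]

end ConformalAlgebra

section Current

lemma curD_single (k : ℕ) (a : g) :
    curD g (Finsupp.single k a) = Finsupp.single (k + 1) a := by
  simp [curD]

lemma generatesUnder_curD :
    GeneratesUnder (curD g) (Set.range (Finsupp.single 0 : g → ℕ →₀ g)) := by
  refine fun p hp hG => Submodule.eq_top_iff'.2 fun x => ?_
  have single_mem (k : ℕ) (a : g) : Finsupp.single k a ∈ p := by
    induction k with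
    | zero => exact hG ⟨a, rfl⟩
    | succ k ih => exact curD_single k a ▸ hp ih
  induction x using Finsupp.induction_linear with
  | zero => exact p.zero_mem
  | add x y hx hy => exact p.add_mem hx hy
  | single k a => exact single_mem k a

/-- The forms `αₙ(∂ⁱa, ∂ᵏb) = (-1)ⁱ n! δ_{n,i+k+1} B(a, b)` on `ℂ[∂] ⊗ g`, i.e.
`α_λ(p(∂)a, q(∂)b) = p(-λ) q(λ) λ B(a, b)` for the generating series `α_λ = ∑ₙ (λⁿ / n!) αₙ`. -/
noncomputable def currentForm (B : LinearMap.BilinForm ℂ g) (n : ℕ) :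
    (ℕ →₀ g) →ₗ[ℂ] (ℕ →₀ g) →ₗ[ℂ] ℂ :=
  Finsupp.lsum ℂ fun i => (Finsupp.lsum ℂ fun k =>
    (if n = i + k + 1 then (-1 : ℂ) ^ i * n.factorial else 0) • B.flip).flip

variable {B : LinearMap.BilinForm ℂ g}

lemma currentForm_single (n i k : ℕ) (a b : g) :
    currentForm B n (Finsupp.single i a) (Finsupp.single k b) =
      (if n = i + k + 1 then (-1 : ℂ) ^ i * n.factorial else 0) * B a b := by
  split_ifs with h <;> simp [currentForm, h]

lemma currentForm_single_zero (n : ℕ) (a b : g) :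
    currentForm B n (Finsupp.single 0 a) (Finsupp.single 0 b) = if n = 1 then B a b else 0 := by
  rw [currentForm_single]
  split_ifs <;> simp_all

lemma exists_forall_ge_currentForm_eq_zero (x y : ℕ →₀ g) :
    ∃ N : ℕ, ∀ n ≥ N, currentForm B n x y = 0 := by
  have avoids_degrees : ∀ᶠ n in Filter.atTop,
      ∀ i ∈ x.support, ∀ k ∈ y.support, n ≠ i + k + 1 := by
    simp only [Finset.eventually_all]
    exact fun i _ k _ => Filter.eventually_ne_atTop _
  refine Filter.eventually_atTop.1 (avoids_degrees.mono fun n hn => ?_)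
  rw [← x.sum_single, ← y.sum_single]
  simp only [Finsupp.sum, map_sum, LinearMap.sum_apply, currentForm_single]
  exact sum_eq_zero fun i hi => sum_eq_zero fun k hk => by simp [hn k hk i hi]

lemma currentForm_curD_left (n : ℕ) (x y : ℕ →₀ g) :
    currentForm B n (curD g x) y = -(n : ℂ) * currentForm B (n - 1) x y := by
  suffices currentForm B n ∘ₗ curD g = -(n : ℂ) • currentForm B (n - 1) from
    LinearMap.congr_fun₂ this x y
  ext i a k b
  cases n with
  | zero => simp [curD_single, currentForm_single]
  | succ n =>
    simp only [LinearMap.coe_comp, Function.comp_apply, Finsupp.lsingle_apply, curD_single,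
      currentForm_single, LinearMap.smul_apply, smul_eq_mul, add_right_comm i 1 k,
      Nat.add_right_cancel_iff, Nat.factorial_succ, Nat.cast_mul, Nat.add_sub_cancel]
    split_ifs <;> ring

lemma currentForm_skew (hB : B.IsSymm) (n : ℕ) (x y : ℕ →₀ g) :
    currentForm B n x y = (-1 : ℂ) ^ (n + 1) * currentForm B n y x := by
  suffices currentForm B n = (-1 : ℂ) ^ (n + 1) • (currentForm B n).flip from
    LinearMap.congr_fun₂ this x y
  ext i a k b
  have sq_eq : (-1 : ℂ) ^ k * (-1) ^ k = 1 := by rw [← mul_pow, neg_one_mul, neg_neg, one_pow]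
  simp only [LinearMap.coe_comp, Function.comp_apply, Finsupp.lsingle_apply, LinearMap.smul_apply,
    LinearMap.flip_apply, currentForm_single, smul_eq_mul, hB.eq b a, add_comm k i]
  split_ifs with h
  · rw [h]
    linear_combination (-(-1 : ℂ) ^ i * (i + k + 1).factorial * B a b) * sq_eq
  · ring

lemma IsCurrent.mul_single_zero {S : ConformalAlgebra (ℕ →₀ g)} (hS : IsCurrent S)
    (n : ℕ) (a b : g) : S.mul n (Finsupp.single 0 a) (Finsupp.single 0 b) =
      if n = 0 then Finsupp.single 0 ⁅a, b⁆ else 0 := by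
  split_ifs with hn
  · rw [hn, hS.2.1]
  · exact hS.2.2 n (Nat.pos_of_ne_zero hn) a b

lemma jacobiDefect_currentForm_single_zero (hinv : B.lieInvariant g)
    {S : ConformalAlgebra (ℕ →₀ g)} (hS : IsCurrent S) (m n : ℕ) (a b c : g) :
    S.jacobiDefect (currentForm B) m n (Finsupp.single 0 a) (Finsupp.single 0 b)
      (Finsupp.single 0 c) = 0 := by
  have B_lie_right : B a ⁅b, c⁆ = B ⁅a, b⁆ c := by
    rw [← lie_skew a b, map_neg, LinearMap.neg_apply, hinv, neg_neg]
  have only_fst_zero : ∑ p ∈ antidiagonal m, (m.choose p.1 : ℂ) *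
      currentForm B (p.2 + n) (S.mul p.1 (Finsupp.single 0 a) (Finsupp.single 0 b))
        (Finsupp.single 0 c) = if m + n = 1 then B ⁅a, b⁆ c else 0 := by
    rw [sum_eq_single (0, m)]
    · simp [hS.mul_single_zero, currentForm_single_zero]
    · rintro ⟨j, k⟩ hjk hne
      have : j ≠ 0 := fun hj => hne (by simp_all)
      simp [hS.mul_single_zero, this]
    · simp
  -- For `(m, n) = (1, 0)` and `(0, 1)` this is invariance of `B`; otherwise every term is zero.
  rw [ConformalAlgebra.jacobiDefect_apply, only_fst_zero]
  simp only [hS.mul_single_zero, apply_ite (currentForm B _ _), map_zero, currentForm_single_zero,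
    B_lie_right, hinv a b c]
  split_ifs <;> simp <;> omega

theorem currentForm_isCocycle (hB : B.IsSymm) (hinv : B.lieInvariant g)
    {S : ConformalAlgebra (ℕ →₀ g)} (hS : IsCurrent S) : IsCocycle S (currentForm B) := by
  refine ConformalAlgebra.isCocycle_of_generatesUnder (hS.1 ▸ generatesUnder_curD)
    exists_forall_ge_currentForm_eq_zero (hS.1 ▸ currentForm_curD_left) (currentForm_skew hB) ?_
  rintro m n _ ⟨a, rfl⟩ _ ⟨b, rfl⟩ _ ⟨c, rfl⟩
  exact jacobiDefect_currentForm_single_zero hinv hS m n a b c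

theorem eq_zero_of_currentForm_eq_apply_mul {S : ConformalAlgebra (ℕ →₀ g)} (hS : IsCurrent S)
    {f : (ℕ →₀ g) →ₗ[ℂ] ℂ} (hf : ∀ n x y, currentForm B n x y = f (S.mul n x y)) : B = 0 := by
  ext a b
  simpa [currentForm_single_zero, hS.mul_single_zero] using
    hf 1 (Finsupp.single 0 a) (Finsupp.single 0 b)

end Current

lemma killingForm_ne_zero (R L : Type*) [CommRing R] [LieRing L] [LieAlgebra R L]
    [LieAlgebra.IsKilling R L] [Nontrivial L] : killingForm R L ≠ 0 := fun h => by
  have ker_eq := LieAlgebra.IsKilling.ker_killingForm_eq_bot R L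
  rw [h, LinearMap.ker_zero] at ker_eq
  exact top_ne_bot ker_eq

theorem killing_cocycle_nontrivial_general {B : LinearMap.BilinForm ℂ g} (hB : B.IsSymm)
    (hinv : B.lieInvariant g) (hne : B ≠ 0)
    (S : ConformalAlgebra (ℕ →₀ g)) (hS : IsCurrent S) :
    ∃ al : ℕ → (ℕ →₀ g) →ₗ[ℂ] (ℕ →₀ g) →ₗ[ℂ] ℂ,
      IsCocycle S al ∧
      (∀ a b : g, al 1 (Finsupp.single 0 a) (Finsupp.single 0 b) = B a b) ∧
      (∀ n : ℕ, n ≠ 1 → ∀ a b : g,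
        al n (Finsupp.single 0 a) (Finsupp.single 0 b) = 0) ∧
      ¬∃ f : (ℕ →₀ g) →ₗ[ℂ] ℂ, ∀ (n : ℕ) (x y : ℕ →₀ g), al n x y = f (S.mul n x y) :=
  ⟨currentForm B, currentForm_isCocycle hB hinv hS,
    fun a b => by simp [currentForm_single_zero],
    fun n hn a b => by simp [currentForm_single_zero, hn],
    fun ⟨_, hf⟩ => hne (eq_zero_of_currentForm_eq_apply_mul hS hf)⟩

/-- For a simple finite-dimensional Lie algebra `g` with Killing form `(·|·)`, the sequence
of bilinear forms on `R(g̃)` determined by `αₙ(a,b) = δ_{n,1} (a|b)` for `a, b ∈ g` is a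
2-cocycle, and it is not of the form `αₙ(a,b) = f(a_{(n)}b)` for any ℂ-linear
`f : R(g̃) → ℂ`, i.e. it is a non-trivial cocycle. -/
theorem killing_cocycle_nontrivial [LieAlgebra.IsSimple ℂ g] [FiniteDimensional ℂ g]
    (S : ConformalAlgebra (ℕ →₀ g)) (hS : IsCurrent S) :
    ∃ al : ℕ → (ℕ →₀ g) →ₗ[ℂ] (ℕ →₀ g) →ₗ[ℂ] ℂ,
      IsCocycle S al ∧
      (∀ a b : g, al 1 (Finsupp.single 0 a) (Finsupp.single 0 b) = killingForm ℂ g a b) ∧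
      (∀ n : ℕ, n ≠ 1 → ∀ a b : g,
        al n (Finsupp.single 0 a) (Finsupp.single 0 b) = 0) ∧
      ¬∃ f : (ℕ →₀ g) →ₗ[ℂ] ℂ, ∀ (n : ℕ) (x y : ℕ →₀ g), al n x y = f (S.mul n x y) := by
  have := LieAlgebra.IsSimple.nontrivial ℂ g
  exact killing_cocycle_nontrivial_general ⟨LieModule.traceForm_comm ℂ g g⟩
    (LieModule.traceForm_lieInvariant ℂ g g) (killingForm_ne_zero ℂ g) S hS
end
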